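/- arXiv:2307.04253 — 4 statements merged into one kernel-verified Lean document; each statement's English description precedes it below -/
import Mathlib

section
/- Let n ≥ 1 be an integer, c ∈ ℝ, 0 < a < b, and let η : [b^{-n}, a^{-n}] → ℝ be C² with c + s²η(s^{-n}) > 0 for all s ∈ (a,b). Define f(s) = √(c + s²η(s^{-n})) on (a,b). Then for every s ∈ (a,b): f′(s)² + f″(s)·f(s) = η(s^{-n}) + (n(n−3)/2)·s^{-n}·η′(s^{-n}) + (n²/2)·s^{-2n}·η″(s^{-n}). -/
/-!
Since `f′² + f″f = (f²)″ / 2`, the square root disappears: only the second derivative of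
`c + s²η(s⁻ⁿ)` is needed. A derivative of `t ^ q * η (t ^ p)` is a combination of two functions of
the same shape, with `η` and `η′` as profiles, so one first-order rule applied twice gives it.
-/

open Filter Topology

section SecondDerivative

variable {𝕜 : Type*} [NontriviallyNormedField 𝕜]

theorem eventually_differentiableAt_of_contDiffAt {E F : Type*}
    [NormedAddCommGroup E] [NormedSpace 𝕜 E] [NormedAddCommGroup F] [NormedSpace 𝕜 F]
    {f : E → F} {x : E} {n : WithTop ℕ∞} (hf : ContDiffAt 𝕜 n f x) (hn : 1 ≤ n) :
    ∀ᶠ y in 𝓝 x, DifferentiableAt 𝕜 f y :=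
  ((hf.of_le hn).eventually (by simp)).mono fun _ hy ↦ hy.differentiableAt one_ne_zero

theorem differentiableAt_deriv_of_contDiffAt {F : Type*} [NormedAddCommGroup F] [NormedSpace 𝕜 F]
    {f : 𝕜 → F} {x : 𝕜} {n : WithTop ℕ∞} (hf : ContDiffAt 𝕜 n f x) (hn : 2 ≤ n) :
    DifferentiableAt 𝕜 (deriv f) x :=
  (hf.derivWithin (one_add_one_eq_two.trans_le hn)).differentiableAt one_ne_zero

theorem deriv_deriv_fun_sq {f : 𝕜 → 𝕜} {x : 𝕜} (hf : ContDiffAt 𝕜 2 f x) :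
    deriv (deriv fun y ↦ f y ^ 2) x = 2 * (deriv f x ^ 2 + deriv (deriv f) x * f x) := by
  have hderiv : (deriv fun y ↦ f y ^ 2) =ᶠ[𝓝 x] fun y ↦ 2 * (f y * deriv f y) := by
    filter_upwards [eventually_differentiableAt_of_contDiffAt hf one_le_two] with y hy
    rw [deriv_fun_pow hy, Nat.cast_ofNat, pow_one, mul_assoc]
  have hmul := (hf.differentiableAt two_ne_zero).hasDerivAt.fun_mul
    (differentiableAt_deriv_of_contDiffAt hf le_rfl).hasDerivAt
  rw [hderiv.deriv_eq, (hmul.const_mul 2).deriv]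
  ring

theorem deriv_sq_add_deriv_deriv_mul_of_eventuallyEq_sqrt {f g : ℝ → ℝ} {x : ℝ}
    (hg : ContDiffAt ℝ 2 g x) (hpos : 0 < g x) (hf : f =ᶠ[𝓝 x] fun y ↦ √(g y)) :
    deriv f x ^ 2 + deriv (deriv f) x * f x = deriv (deriv g) x / 2 := by
  have hf₂ : ContDiffAt ℝ 2 f x := (hg.sqrt hpos.ne').congr_of_eventuallyEq hf
  have hsq : (fun y ↦ f y ^ 2) =ᶠ[𝓝 x] g := by
    filter_upwards [hf, hg.continuousAt.eventually_const_lt hpos] with y hfy hgy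
    rw [hfy, Real.sq_sqrt hgy.le]
  rw [← hsq.deriv.deriv_eq, deriv_deriv_fun_sq hf₂, mul_div_cancel_left₀ _ two_ne_zero]

end SecondDerivative

section RealPower

variable {η : ℝ → ℝ} {p x : ℝ}

theorem hasDerivAt_rpow_mul_comp_rpow (q : ℝ) (hx : 0 < x) (hη : DifferentiableAt ℝ η (x ^ p)) :
    HasDerivAt (fun t ↦ t ^ q * η (t ^ p))
      (q * (x ^ (q - 1) * η (x ^ p)) + p * (x ^ (q + p - 1) * deriv η (x ^ p))) x := by
  have hpow (r : ℝ) : HasDerivAt (fun t : ℝ ↦ t ^ r) (r * x ^ (r - 1)) x :=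
    Real.hasDerivAt_rpow_const (.inl hx.ne')
  refine ((hpow q).fun_mul (hη.hasDerivAt.comp x (hpow p))).congr_deriv ?_
  rw [add_sub_assoc, Real.rpow_add hx, Function.comp_apply]
  ring

theorem deriv_deriv_rpow_mul_comp_rpow (q : ℝ) (hx : 0 < x) (hη : ContDiffAt ℝ 2 η (x ^ p)) :
    deriv (deriv fun t ↦ t ^ q * η (t ^ p)) x =
      q * (q - 1) * x ^ (q - 2) * η (x ^ p)
        + p * (2 * q + p - 1) * x ^ (q + p - 2) * deriv η (x ^ p)
        + p ^ 2 * x ^ (q + 2 * p - 2) * deriv (deriv η) (x ^ p) := by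
  have hpow : ContinuousAt (fun t : ℝ ↦ t ^ p) x :=
    Real.continuousAt_rpow_const _ _ (.inl hx.ne')
  have hderiv : (deriv fun t ↦ t ^ q * η (t ^ p)) =ᶠ[𝓝 x] fun t ↦
      q * (t ^ (q - 1) * η (t ^ p)) + p * (t ^ (q + p - 1) * deriv η (t ^ p)) := by
    filter_upwards [eventually_gt_nhds hx,
      hpow.eventually (eventually_differentiableAt_of_contDiffAt hη one_le_two)] with t ht hηt
    exact (hasDerivAt_rpow_mul_comp_rpow q ht hηt).deriv
  have hterm₀ := hasDerivAt_rpow_mul_comp_rpow (q - 1) hx (hη.differentiableAt two_ne_zero)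
  have hterm₁ := hasDerivAt_rpow_mul_comp_rpow (q + p - 1) hx
    (differentiableAt_deriv_of_contDiffAt hη le_rfl)
  rw [hderiv.deriv_eq, ((hterm₀.const_mul q).fun_add (hterm₁.const_mul p)).deriv]
  ring_nf

theorem deriv_deriv_sq_mul_comp_rpow (hx : 0 < x) (hη : ContDiffAt ℝ 2 η (x ^ p)) :
    deriv (deriv fun t ↦ t ^ 2 * η (t ^ p)) x =
      2 * η (x ^ p) + p * (p + 3) * x ^ p * deriv η (x ^ p)
        + p ^ 2 * x ^ (2 * p) * deriv (deriv η) (x ^ p) := by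
  have h := deriv_deriv_rpow_mul_comp_rpow 2 hx hη
  simp only [Real.rpow_two, sub_self, Real.rpow_zero, add_sub_cancel_left] at h
  rw [h]
  ring

theorem rpow_mem_Ioo_of_neg {a b : ℝ} (ha : 0 < a) (hx : x ∈ Set.Ioo a b) (hp : p < 0) :
    x ^ p ∈ Set.Ioo (b ^ p) (a ^ p) :=
  ⟨Real.rpow_lt_rpow_of_neg (ha.trans hx.1) hx.2 hp, Real.rpow_lt_rpow_of_neg ha hx.1 hp⟩

end RealPower

theorem stmt_3_general (n c : ℝ) {s : ℝ} (hs : 0 < s) {η f : ℝ → ℝ}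
    (hη : ContDiffAt ℝ 2 η (s ^ (-n))) (hpos : 0 < c + s ^ 2 * η (s ^ (-n)))
    (hf : f =ᶠ[𝓝 s] fun t ↦ √(c + t ^ 2 * η (t ^ (-n)))) :
    deriv f s ^ 2 + deriv (deriv f) s * f s
      = η (s ^ (-n))
        + (n * (n - 3) / 2) * s ^ (-n) * deriv η (s ^ (-n))
        + (n ^ 2 / 2) * s ^ (-(2 * n)) * deriv (deriv η) (s ^ (-n)) := by
  have hg : ContDiffAt ℝ 2 (fun t ↦ c + t ^ 2 * η (t ^ (-n))) s :=
    contDiffAt_const.add <| (contDiffAt_id.pow 2).mul <|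
      hη.comp s (Real.contDiffAt_rpow_const_of_ne hs.ne')
  rw [deriv_sq_add_deriv_deriv_mul_of_eventuallyEq_sqrt hg hpos hf, deriv_const_add',
    deriv_deriv_sq_mul_comp_rpow hs hη, mul_neg]
  ring

/-- Second displayed computation in the proof of Lemma 2.3:
for `f(s) = √(c + s²η(s^{-n}))` one has
`f′² + f″f = η(s^{-n}) + (n(n−3)/2) s^{-n} η′(s^{-n}) + (n²/2) s^{-2n} η″(s^{-n})`. -/
theorem stmt_3 (n : ℕ) (hn : 1 ≤ n) (c a b : ℝ) (ha : 0 < a) (hab : a < b)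
    (η : ℝ → ℝ)
    (hη : ContDiffOn ℝ 2 η (Set.Icc (b ^ (-(n : ℤ))) (a ^ (-(n : ℤ)))))
    (hpos : ∀ s ∈ Set.Ioo a b, 0 < c + s ^ 2 * η (s ^ (-(n : ℤ))))
    (f : ℝ → ℝ)
    (hf : ∀ s ∈ Set.Ioo a b, f s = Real.sqrt (c + s ^ 2 * η (s ^ (-(n : ℤ))))) :
    ∀ s ∈ Set.Ioo a b,
      deriv f s ^ 2 + deriv (deriv f) s * f s
        = η (s ^ (-(n : ℤ)))
          + ((n : ℝ) * ((n : ℝ) - 3) / 2) * s ^ (-(n : ℤ)) * deriv η (s ^ (-(n : ℤ)))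
          + ((n : ℝ) ^ 2 / 2) * s ^ (-(2 * (n : ℤ))) * deriv (deriv η) (s ^ (-(n : ℤ))) := by
  simp only [← Real.rpow_intCast, Int.cast_neg, Int.cast_mul, Int.cast_ofNat, Int.cast_natCast]
    at hη hpos hf ⊢
  have hn' : -(n : ℝ) < 0 := neg_lt_zero.2 (Nat.cast_pos.2 hn)
  exact fun s hs ↦ stmt_3_general n c (ha.trans hs.1)
    (hη.contDiffAt (Icc_mem_nhds_iff.2 (rpow_mem_Ioo_of_neg ha hs hn'))) (hpos s hs)
    (eventually_of_mem (Ioo_mem_nhds hs.1 hs.2) hf)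
end

section
/- Let ρ̄ ∈ (0, ∞], let U ⊆ ℝ be an open interval, let f : (0, ρ̄) × U → (0, ∞) be C², and let φ : (0, ρ̄) → ℝ be C² with φ′(ρ) ≠ 0 for all ρ. Assume that at every point (ρ, θ): ∂ρ∂θ f − (φ″(ρ)/φ′(ρ))·∂θ f = 2·∂ρ f·∂θ f / f. Then for all ρ₁, ρ₂ ∈ (0, ρ̄) and all θ ∈ U: ∂θ(1/f)(ρ₂, θ) = (φ′(ρ₂)/φ′(ρ₁)) · ∂θ(1/f)(ρ₁, θ). -/
/-! For fixed `θ`, the function `u(ρ) = ∂θ(1/f)(ρ, θ) = -∂θf / f²` has derivative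
`u' = -(∂ρ∂θf - 2 ∂ρf ∂θf / f) / f²`, so the equation for `f` says that `u' = (φ″/φ′) u`.
This is a linear first-order equation, which `φ′` (`ψ` below) solves as well, hence `u / φ′` is
constant in `ρ`. -/

open Set Filter Topology Function

section LinearODE

variable {𝕜 E : Type*} [RCLike 𝕜] [NormedAddCommGroup E] [NormedSpace 𝕜 E]

theorem eq_div_smul_of_deriv_eq_logDeriv_smul {s : Set 𝕜} (hs : IsOpen s)
    (hs' : IsPreconnected s) {ψ : 𝕜 → 𝕜} {u : 𝕜 → E} (hψ : DifferentiableOn 𝕜 ψ s)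
    (hψ₀ : ∀ x ∈ s, ψ x ≠ 0) (hu : DifferentiableOn 𝕜 u s)
    (hode : ∀ x ∈ s, deriv u x = logDeriv ψ x • u x) {x y : 𝕜} (hx : x ∈ s) (hy : y ∈ s) :
    u y = (ψ y / ψ x) • u x := by
  have hquot : ∀ z ∈ s, HasDerivAt (fun z ↦ (ψ z)⁻¹ • u z) 0 z := by
    intro z hz
    have hψz := (hψ.differentiableAt (hs.mem_nhds hz)).hasDerivAt
    have huz := (hu.differentiableAt (hs.mem_nhds hz)).hasDerivAt
    refine ((hψz.fun_inv (hψ₀ z hz)).smul huz).congr_deriv ?_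
    rw [hode z hz, smul_smul, ← add_smul, logDeriv_apply]
    convert zero_smul 𝕜 (u z)
    field [hψ₀ z hz]
  have hconst : (ψ y)⁻¹ • u y = (ψ x)⁻¹ • u x :=
    hs.is_const_of_deriv_eq_zero hs'
      (fun z hz ↦ (hquot z hz).differentiableAt.differentiableWithinAt)
      (fun z hz ↦ (hquot z hz).deriv) hy hx
  rw [div_eq_mul_inv, mul_smul, ← hconst, smul_inv_smul₀ (hψ₀ y hy)]

end LinearODE

section PartialDerivatives

variable {𝕜 : Type*} [NontriviallyNormedField 𝕜]

section Regularity

variable {E F G : Type*} [NormedAddCommGroup E] [NormedSpace 𝕜 E]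
  [NormedAddCommGroup F] [NormedSpace 𝕜 F] [NormedAddCommGroup G] [NormedSpace 𝕜 G]

theorem differentiableAt_left_of_uncurry {f : E → F → G} {x : E} {y : F}
    (hf : DifferentiableAt 𝕜 (uncurry f) (x, y)) : DifferentiableAt 𝕜 (fun z ↦ f z y) x :=
  hf.comp (f := fun z ↦ (z, y)) x (by fun_prop)

theorem differentiableAt_right_of_uncurry {f : E → F → G} {x : E} {y : F}
    (hf : DifferentiableAt 𝕜 (uncurry f) (x, y)) : DifferentiableAt 𝕜 (f x) y :=
  hf.comp (f := fun z ↦ (x, z)) y (by fun_prop)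

theorem differentiableAt_deriv_right_of_uncurry {f : E → 𝕜 → G} {x : E} {y : 𝕜}
    (hf : ContDiffAt 𝕜 2 (uncurry f) (x, y)) :
    DifferentiableAt 𝕜 (fun z ↦ deriv (f z) y) x := by
  have hfderiv : ContDiffAt 𝕜 1 (fun z ↦ fderiv 𝕜 (f z) y) x :=
    hf.fderiv contDiffAt_const one_add_one_eq_two.le
  exact (hfderiv.differentiableAt one_ne_zero).clm_apply (differentiableAt_const 1)

end Regularity

theorem hasDerivAt_deriv_one_div {f : 𝕜 → 𝕜 → 𝕜} {x y : 𝕜}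
    (hright : ∀ᶠ z in 𝓝 x, DifferentiableAt 𝕜 (f z) y)
    (hleft : DifferentiableAt 𝕜 (fun z ↦ f z y) x)
    (hmixed : DifferentiableAt 𝕜 (fun z ↦ deriv (f z) y) x) (hf₀ : f x y ≠ 0) :
    HasDerivAt (fun z ↦ deriv (fun t ↦ 1 / f z t) y)
      (-(deriv (fun z ↦ deriv (f z) y) x
        - 2 * deriv (fun z ↦ f z y) x * deriv (f x) y / f x y) / f x y ^ 2) x := by
  have hquot : (fun z ↦ deriv (fun t ↦ 1 / f z t) y) =ᶠ[𝓝 x]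
      fun z ↦ -deriv (f z) y / f z y ^ 2 := by
    filter_upwards [hright, hleft.continuousAt.eventually_ne hf₀] with z hz hz₀
    simp only [one_div]
    exact deriv_fun_inv'' hz hz₀
  refine HasDerivAt.congr_of_eventuallyEq ?_ hquot
  refine (hmixed.hasDerivAt.fun_neg.fun_div (hleft.hasDerivAt.fun_pow 2)
    (pow_ne_zero 2 hf₀)).congr_deriv ?_
  field

end PartialDerivatives

theorem setOfPred_lt_and_coe_lt_eq_preimage (a : ℝ) (b : EReal) :
    {x : ℝ | a < x ∧ (x : EReal) < b} = Real.toEReal ⁻¹' Ioo (a : EReal) b := by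
  ext x
  simp only [mem_ofPred_eq, mem_preimage, mem_Ioo, EReal.coe_lt_coe_iff]

theorem isOpen_setOfPred_lt_and_coe_lt (a : ℝ) (b : EReal) :
    IsOpen {x : ℝ | a < x ∧ (x : EReal) < b} := by
  rw [setOfPred_lt_and_coe_lt_eq_preimage]
  exact isOpen_Ioo.preimage continuous_coe_real_ereal

theorem isPreconnected_setOfPred_lt_and_coe_lt (a : ℝ) (b : EReal) :
    IsPreconnected {x : ℝ | a < x ∧ (x : EReal) < b} := by
  rw [setOfPred_lt_and_coe_lt_eq_preimage]
  exact (ordConnected_Ioo.preimage_mono EReal.coe_strictMono.monotone).isPreconnected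

theorem stmt_10_general {𝕜 : Type*} [RCLike 𝕜] {I : Set 𝕜} (hI : IsOpen I)
    (hI' : IsPreconnected I) {f : 𝕜 → 𝕜 → 𝕜} {ψ : 𝕜 → 𝕜} {θ : 𝕜}
    (hfθ : ∀ ρ ∈ I, DifferentiableAt 𝕜 (f ρ) θ)
    (hfρ : ∀ ρ ∈ I, DifferentiableAt 𝕜 (fun r ↦ f r θ) ρ)
    (hfρθ : ∀ ρ ∈ I, DifferentiableAt 𝕜 (fun r ↦ deriv (f r) θ) ρ)
    (hf₀ : ∀ ρ ∈ I, f ρ θ ≠ 0) (hψ : DifferentiableOn 𝕜 ψ I) (hψ₀ : ∀ ρ ∈ I, ψ ρ ≠ 0)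
    (hPDE : ∀ ρ ∈ I, deriv (fun r ↦ deriv (f r) θ) ρ - (deriv ψ ρ / ψ ρ) * deriv (f ρ) θ
      = 2 * deriv (fun r ↦ f r θ) ρ * deriv (f ρ) θ / f ρ θ)
    {ρ₁ ρ₂ : 𝕜} (hρ₁ : ρ₁ ∈ I) (hρ₂ : ρ₂ ∈ I) :
    deriv (fun t ↦ 1 / f ρ₂ t) θ = (ψ ρ₂ / ψ ρ₁) * deriv (fun t ↦ 1 / f ρ₁ t) θ := by
  have hu : ∀ ρ ∈ I, HasDerivAt (fun r ↦ deriv (fun t ↦ 1 / f r t) θ)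
      (logDeriv ψ ρ • deriv (fun t ↦ 1 / f ρ t) θ) ρ := by
    intro ρ hρ
    refine (hasDerivAt_deriv_one_div (eventually_of_mem (hI.mem_nhds hρ) hfθ) (hfρ ρ hρ)
      (hfρθ ρ hρ) (hf₀ ρ hρ)).congr_deriv ?_
    simp only [one_div]
    rw [← hPDE ρ hρ, deriv_fun_inv'' (hfθ ρ hρ) (hf₀ ρ hρ), logDeriv_apply, smul_eq_mul]
    ring
  exact eq_div_smul_of_deriv_eq_logDeriv_smul hI hI' hψ hψ₀
    (fun ρ hρ ↦ (hu ρ hρ).differentiableAt.differentiableWithinAt)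
    (fun ρ hρ ↦ (hu ρ hρ).deriv) hρ₁ hρ₂

/-- Equation (3.18) of the paper:
`∂θ(1/f)(ρ₂,θ) = (φ′(ρ₂)/φ′(ρ₁)) ∂θ(1/f)(ρ₁,θ)` (proof of Theorem 3.1). -/
theorem stmt_10 (ρbar : EReal) (hρbar : 0 < ρbar)
    (U : Set ℝ) (hU : IsOpen U) (hU' : U.OrdConnected)
    (f : ℝ → ℝ → ℝ)
    (hf : ContDiffOn ℝ 2 (fun p : ℝ × ℝ => f p.1 p.2)
      ({ρ : ℝ | 0 < ρ ∧ (ρ : EReal) < ρbar} ×ˢ U))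
    (hfpos : ∀ ρ : ℝ, 0 < ρ → (ρ : EReal) < ρbar → ∀ θ ∈ U, 0 < f ρ θ)
    (φ : ℝ → ℝ) (hφ : ContDiffOn ℝ 2 φ {ρ : ℝ | 0 < ρ ∧ (ρ : EReal) < ρbar})
    (hφ' : ∀ ρ : ℝ, 0 < ρ → (ρ : EReal) < ρbar → deriv φ ρ ≠ 0)
    (hPDE : ∀ ρ : ℝ, 0 < ρ → (ρ : EReal) < ρbar → ∀ θ ∈ U,
      deriv (fun r => deriv (fun t => f r t) θ) ρ
          - (deriv (deriv φ) ρ / deriv φ ρ) * deriv (fun t => f ρ t) θ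
        = 2 * deriv (fun r => f r θ) ρ * deriv (fun t => f ρ t) θ / f ρ θ) :
    ∀ ρ₁ ρ₂ : ℝ, 0 < ρ₁ → (ρ₁ : EReal) < ρbar → 0 < ρ₂ → (ρ₂ : EReal) < ρbar →
      ∀ θ ∈ U,
        deriv (fun t => 1 / f ρ₂ t) θ
          = (deriv φ ρ₂ / deriv φ ρ₁) * deriv (fun t => 1 / f ρ₁ t) θ := by
  intro ρ₁ ρ₂ hρ₁ hρ₁' hρ₂ hρ₂' θ hθ
  have hI := isOpen_setOfPred_lt_and_coe_lt 0 ρbar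
  have hfC2 : ∀ ρ ∈ {ρ : ℝ | 0 < ρ ∧ (ρ : EReal) < ρbar}, ContDiffAt ℝ 2 (uncurry f) (ρ, θ) :=
    fun ρ hρ ↦ hf.contDiffAt ((hI.prod hU).mem_nhds ⟨hρ, hθ⟩)
  have hfdiff := fun ρ hρ ↦ (hfC2 ρ hρ).differentiableAt two_ne_zero
  exact stmt_10_general hI (isPreconnected_setOfPred_lt_and_coe_lt 0 ρbar)
    (fun ρ hρ ↦ differentiableAt_right_of_uncurry (hfdiff ρ hρ))
    (fun ρ hρ ↦ differentiableAt_left_of_uncurry (hfdiff ρ hρ))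
    (fun ρ hρ ↦ differentiableAt_deriv_right_of_uncurry (hfC2 ρ hρ))
    (fun ρ hρ ↦ (hfpos ρ hρ.1 hρ.2 θ hθ).ne')
    ((hφ.deriv_of_isOpen hI one_add_one_eq_two.le).differentiableOn one_ne_zero)
    (fun ρ hρ ↦ hφ' ρ hρ.1 hρ.2) (fun ρ hρ ↦ hPDE ρ hρ.1 hρ.2 θ hθ) ⟨hρ₁, hρ₁'⟩ ⟨hρ₂, hρ₂'⟩
end

section
/- Let ρ̄ ∈ (0, ∞], let U ⊆ ℝ be an open interval, let f : (0, ρ̄) × U → (0, ∞) be C², and let φ : (0, ρ̄) → ℝ be C² with φ′(ρ) ≠ 0 for all ρ. Assume that at every point (ρ, θ): ∂ρ∂θ f − (φ″(ρ)/φ′(ρ))·∂θ f = 2·∂ρ f·∂θ f / f. Then for all ρ₁, ρ₂ ∈ (0, ρ̄) and all θ₀, θ₁ ∈ U: ( φ′(ρ₂) f(ρ₂,θ₀) − φ′(ρ₂) f(ρ₂,θ₁) ) / ( φ′(ρ₂)² f(ρ₂,θ₀) f(ρ₂,θ₁) ) = ( φ′(ρ₁) f(ρ₁,θ₀) − φ′(ρ₁)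 f(ρ₁,θ₁) ) / ( φ′(ρ₁)² f(ρ₁,θ₀) f(ρ₁,θ₁) ). -/
/-!
For fixed `θ` the equation says that `∂θ f` and `φ' f ^ 2` have the same logarithmic `ρ`-derivative.
Hence `∂θ f / (φ' f ^ 2) = -∂θ (1 / (φ' f))` does not depend on `ρ`, so that the functions
`1 / (φ' f)` of `θ` at `ρ₁` and at `ρ₂` differ by a constant. The two sides of the identity are the
increments of these functions from `θ₀` to `θ₁`.
-/

open Function Set

section Slices

variable {𝕜 E F G : Type*} [NontriviallyNormedField 𝕜]
  [NormedAddCommGroup E] [NormedSpace 𝕜 E] [NormedAddCommGroup F] [NormedSpace 𝕜 F]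
  [NormedAddCommGroup G] [NormedSpace 𝕜 G]

theorem differentiableOn_of_uncurry_left {f : E → F → G} {s : Set E} {t : Set F}
    (hf : DifferentiableOn 𝕜 (uncurry f) (s ×ˢ t)) {x : E} (hx : x ∈ s) :
    DifferentiableOn 𝕜 (f x) t :=
  hf.comp (f := fun y => (x, y)) (by fun_prop) fun _ hy => ⟨hx, hy⟩

theorem differentiableOn_of_uncurry_right {f : E → F → G} {s : Set E} {t : Set F}
    (hf : DifferentiableOn 𝕜 (uncurry f) (s ×ˢ t)) {y : F} (hy : y ∈ t) :
    DifferentiableOn 𝕜 (fun x => f x y) s :=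
  hf.comp (f := fun x => (x, y)) (by fun_prop) fun _ hx => ⟨hx, hy⟩

theorem differentiableOn_deriv_of_contDiffOn_uncurry {f : E → 𝕜 → G} {s : Set E} {t : Set 𝕜}
    (hs : IsOpen s) (ht : IsOpen t) (hf : ContDiffOn 𝕜 2 (uncurry f) (s ×ˢ t))
    {y : 𝕜} (hy : y ∈ t) :
    DifferentiableOn 𝕜 (fun x => deriv (f x) y) s := by
  intro x hx
  have hfxy : ContDiffAt 𝕜 2 (uncurry f) (x, y) :=
    hf.contDiffAt ((hs.prod ht).mem_nhds ⟨hx, hy⟩)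
  have hfderiv : ContDiffAt 𝕜 1 (fun x => fderiv 𝕜 (f x) y) x :=
    hfxy.fderiv contDiffAt_const one_add_one_eq_two.le
  simp only [← fderiv_apply_one_eq_deriv]
  exact ((hfderiv.differentiableAt one_ne_zero).clm_apply
    (differentiableAt_const _)).differentiableWithinAt

end Slices

section ConstantQuotient

variable {𝕜 : Type*} [RCLike 𝕜] {s : Set 𝕜}

theorem div_eq_div_of_deriv_mul_eq_mul_deriv (hs : IsOpen s) (hs' : IsPreconnected s)
    {g h : 𝕜 → 𝕜} (hg : DifferentiableOn 𝕜 g s) (hh : DifferentiableOn 𝕜 h s)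
    (h_ne : ∀ x ∈ s, h x ≠ 0) (hgh : ∀ x ∈ s, deriv g x * h x = g x * deriv h x)
    {x y : 𝕜} (hx : x ∈ s) (hy : y ∈ s) :
    g x / h x = g y / h y := by
  refine hs.is_const_of_deriv_eq_zero (f := fun z => g z / h z) hs' (hg.fun_div hh h_ne)
    (fun z hz => ?_) hx hy
  have hz' := hs.mem_nhds hz
  rw [deriv_fun_div (hg.differentiableAt hz') (hh.differentiableAt hz') (h_ne z hz), hgh z hz]
  simp

theorem sub_eq_sub_of_deriv_eq (hs : IsOpen s) (hs' : IsPreconnected s)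
    {g h : 𝕜 → 𝕜} (hg : DifferentiableOn 𝕜 g s) (hh : DifferentiableOn 𝕜 h s)
    (hgh : EqOn (deriv g) (deriv h) s) {x y : 𝕜} (hx : x ∈ s) (hy : y ∈ s) :
    g x - g y = h x - h y := by
  obtain ⟨c, hc⟩ := hs.exists_eq_add_of_deriv_eq hs' hg hh hgh
  rw [hc hx, hc hy, add_sub_add_right_eq_sub]

theorem div_mul_sq_eq_of_deriv_sub_eq (hs : IsOpen s) (hs' : IsPreconnected s) {g w u : 𝕜 → 𝕜}
    (hg : DifferentiableOn 𝕜 g s) (hw : DifferentiableOn 𝕜 w s) (hu : DifferentiableOn 𝕜 u s)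
    (hw_ne : ∀ x ∈ s, w x ≠ 0) (hu_ne : ∀ x ∈ s, u x ≠ 0)
    (hode : ∀ x ∈ s, deriv g x - deriv w x / w x * g x = 2 * deriv u x * g x / u x)
    {x y : 𝕜} (hx : x ∈ s) (hy : y ∈ s) :
    g x / (w x * u x ^ 2) = g y / (w y * u y ^ 2) := by
  refine div_eq_div_of_deriv_mul_eq_mul_deriv (h := fun z => w z * u z ^ 2) hs hs' hg
    (hw.fun_mul (hu.fun_pow 2))
    (fun z hz => mul_ne_zero (hw_ne z hz) (pow_ne_zero 2 (hu_ne z hz))) (fun z hz => ?_) hx hy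
  have hwz := hw_ne z hz
  have huz := hu_ne z hz
  have hw' := hw.differentiableAt (hs.mem_nhds hz)
  have hu' := hu.differentiableAt (hs.mem_nhds hz)
  have hderiv : deriv (fun z => w z * u z ^ 2) z
      = deriv w z * u z ^ 2 + w z * (2 * u z * deriv u z) := by
    rw [deriv_fun_mul hw' (hu'.fun_pow 2), deriv_fun_pow hu']
    norm_num
  rw [hderiv, sub_eq_iff_eq_add.mp (hode z hz)]
  field_simp
  ring

end ConstantQuotient

theorem deriv_inv_const_mul {𝕜 : Type*} [NontriviallyNormedField 𝕜] {u : 𝕜 → 𝕜} {c x : 𝕜}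
    (hu : DifferentiableAt 𝕜 u x) (hc : c ≠ 0) (hux : u x ≠ 0) :
    deriv (fun y => (c * u y)⁻¹) x = -(deriv u x / (c * u x ^ 2)) := by
  rw [deriv_fun_inv'' (hu.const_mul c) (mul_ne_zero hc hux), deriv_const_mul c hu]
  field_simp

theorem mul_sub_mul_div_sq_mul_eq_inv_sub_inv {K : Type*} [Field K] {c a b : K}
    (hc : c ≠ 0) (ha : a ≠ 0) (hb : b ≠ 0) :
    (c * a - c * b) / (c ^ 2 * a * b) = (c * b)⁻¹ - (c * a)⁻¹ := by
  field_simp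

theorem isOpen_setOf_pos_and_coe_lt (b : EReal) : IsOpen {x : ℝ | 0 < x ∧ (x : EReal) < b} :=
  isOpen_Ioi.inter (isOpen_Iio.preimage continuous_coe_real_ereal)

theorem ordConnected_setOf_pos_and_coe_lt (b : EReal) :
    OrdConnected {x : ℝ | 0 < x ∧ (x : EReal) < b} :=
  ordConnected_Ioi.inter (ordConnected_Iio.preimage_mono EReal.coe_strictMono.monotone)

/-- The function `w` plays the role of `φ'`, and the interval `(0, ρ̄)` becomes `I`. -/
theorem stmt_11_general {𝕜 : Type*} [RCLike 𝕜] {I U : Set 𝕜}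
    (hI : IsOpen I) (hI' : IsPreconnected I) (hU : IsOpen U) (hU' : IsPreconnected U)
    {f : 𝕜 → 𝕜 → 𝕜} {w : 𝕜 → 𝕜}
    (hfρ : ∀ θ ∈ U, DifferentiableOn 𝕜 (fun r => f r θ) I)
    (hfθ : ∀ ρ ∈ I, DifferentiableOn 𝕜 (f ρ) U)
    (hfθρ : ∀ θ ∈ U, DifferentiableOn 𝕜 (fun r => deriv (f r) θ) I)
    (hw : DifferentiableOn 𝕜 w I)
    (hf_ne : ∀ ρ ∈ I, ∀ θ ∈ U, f ρ θ ≠ 0) (hw_ne : ∀ ρ ∈ I, w ρ ≠ 0)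
    (hPDE : ∀ ρ ∈ I, ∀ θ ∈ U,
      deriv (fun r => deriv (f r) θ) ρ - deriv w ρ / w ρ * deriv (f ρ) θ
        = 2 * deriv (fun r => f r θ) ρ * deriv (f ρ) θ / f ρ θ)
    {ρ₁ ρ₂ : 𝕜} (hρ₁ : ρ₁ ∈ I) (hρ₂ : ρ₂ ∈ I) {θ₀ θ₁ : 𝕜} (hθ₀ : θ₀ ∈ U) (hθ₁ : θ₁ ∈ U) :
    (w ρ₂ * f ρ₂ θ₀ - w ρ₂ * f ρ₂ θ₁) / (w ρ₂ ^ 2 * f ρ₂ θ₀ * f ρ₂ θ₁)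
      = (w ρ₁ * f ρ₁ θ₀ - w ρ₁ * f ρ₁ θ₁) / (w ρ₁ ^ 2 * f ρ₁ θ₀ * f ρ₁ θ₁) := by
  have hdiff : ∀ ρ ∈ I, DifferentiableOn 𝕜 (fun t => (w ρ * f ρ t)⁻¹) U := fun ρ hρ =>
    ((hfθ ρ hρ).const_mul (w ρ)).fun_inv fun θ hθ => mul_ne_zero (hw_ne ρ hρ) (hf_ne ρ hρ θ hθ)
  have hderiv : ∀ ρ ∈ I, ∀ θ ∈ U,
      deriv (fun t => (w ρ * f ρ t)⁻¹) θ = -(deriv (f ρ) θ / (w ρ * f ρ θ ^ 2)) := fun ρ hρ θ hθ =>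
    deriv_inv_const_mul ((hfθ ρ hρ).differentiableAt (hU.mem_nhds hθ)) (hw_ne ρ hρ)
      (hf_ne ρ hρ θ hθ)
  have hderiv_eq :
      EqOn (deriv fun t => (w ρ₂ * f ρ₂ t)⁻¹) (deriv fun t => (w ρ₁ * f ρ₁ t)⁻¹) U := by
    intro θ hθ
    rw [hderiv ρ₂ hρ₂ θ hθ, hderiv ρ₁ hρ₁ θ hθ,
      div_mul_sq_eq_of_deriv_sub_eq hI hI' (hfθρ θ hθ) hw (hfρ θ hθ) hw_ne
        (fun ρ hρ => hf_ne ρ hρ θ hθ) (fun ρ hρ => hPDE ρ hρ θ hθ) hρ₂ hρ₁]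
  rw [mul_sub_mul_div_sq_mul_eq_inv_sub_inv (hw_ne ρ₂ hρ₂) (hf_ne ρ₂ hρ₂ θ₀ hθ₀)
      (hf_ne ρ₂ hρ₂ θ₁ hθ₁),
    mul_sub_mul_div_sq_mul_eq_inv_sub_inv (hw_ne ρ₁ hρ₁) (hf_ne ρ₁ hρ₁ θ₀ hθ₀)
      (hf_ne ρ₁ hρ₁ θ₁ hθ₁)]
  exact sub_eq_sub_of_deriv_eq hU hU' (hdiff ρ₂ hρ₂) (hdiff ρ₁ hρ₁) hderiv_eq hθ₁ hθ₀

/-- The key identity (3.19) of the paper, obtained integrating (3.18) in `θ`. -/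
theorem stmt_11 (ρbar : EReal) (hρbar : 0 < ρbar)
    (U : Set ℝ) (hU : IsOpen U) (hU' : U.OrdConnected)
    (f : ℝ → ℝ → ℝ)
    (hf : ContDiffOn ℝ 2 (fun p : ℝ × ℝ => f p.1 p.2)
      ({ρ : ℝ | 0 < ρ ∧ (ρ : EReal) < ρbar} ×ˢ U))
    (hfpos : ∀ ρ : ℝ, 0 < ρ → (ρ : EReal) < ρbar → ∀ θ ∈ U, 0 < f ρ θ)
    (φ : ℝ → ℝ) (hφ : ContDiffOn ℝ 2 φ {ρ : ℝ | 0 < ρ ∧ (ρ : EReal) < ρbar})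
    (hφ' : ∀ ρ : ℝ, 0 < ρ → (ρ : EReal) < ρbar → deriv φ ρ ≠ 0)
    (hPDE : ∀ ρ : ℝ, 0 < ρ → (ρ : EReal) < ρbar → ∀ θ ∈ U,
      deriv (fun r => deriv (fun t => f r t) θ) ρ
          - (deriv (deriv φ) ρ / deriv φ ρ) * deriv (fun t => f ρ t) θ
        = 2 * deriv (fun r => f r θ) ρ * deriv (fun t => f ρ t) θ / f ρ θ) :
    ∀ ρ₁ ρ₂ : ℝ, 0 < ρ₁ → (ρ₁ : EReal) < ρbar → 0 < ρ₂ → (ρ₂ : EReal) < ρbar →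
      ∀ θ₀ ∈ U, ∀ θ₁ ∈ U,
        (deriv φ ρ₂ * f ρ₂ θ₀ - deriv φ ρ₂ * f ρ₂ θ₁)
            / (deriv φ ρ₂ ^ 2 * f ρ₂ θ₀ * f ρ₂ θ₁)
          = (deriv φ ρ₁ * f ρ₁ θ₀ - deriv φ ρ₁ * f ρ₁ θ₁)
              / (deriv φ ρ₁ ^ 2 * f ρ₁ θ₀ * f ρ₁ θ₁) := by
  have hI := isOpen_setOf_pos_and_coe_lt ρbar
  have hf' := hf.differentiableOn two_ne_zero
  have hφ'' := (hφ.deriv_of_isOpen hI one_add_one_eq_two.le).differentiableOn one_ne_zero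
  exact fun ρ₁ ρ₂ h₁ h₁' h₂ h₂' θ₀ hθ₀ θ₁ hθ₁ => stmt_11_general
    hI (ordConnected_setOf_pos_and_coe_lt ρbar).isPreconnected hU hU'.isPreconnected
    (fun _ => differentiableOn_of_uncurry_right hf') (fun _ => differentiableOn_of_uncurry_left hf')
    (fun _ => differentiableOn_deriv_of_contDiffOn_uncurry hI hU hf) hφ''
    (fun ρ hρ θ hθ => (hfpos ρ hρ.1 hρ.2 θ hθ).ne') (fun ρ hρ => hφ' ρ hρ.1 hρ.2)
    (fun ρ hρ => hPDE ρ hρ.1 hρ.2) ⟨h₁, h₁'⟩ ⟨h₂, h₂'⟩ hθ₀ hθ₁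
end

section
/- Let U ⊆ ℝ be an open interval, let f : (0, ∞) × U → (0, ∞) be C², and let φ : (0, ∞) → ℝ be C² with φ′(ρ) ≠ 0 for all ρ. Assume that at every point (ρ, θ): ∂ρ∂θ f − (φ″(ρ)/φ′(ρ))·∂θ f = 2·∂ρ f·∂θ f / f. Assume moreover that there exists a constant L ≠ 0 such that for every θ ∈ U, φ′(ρ)·f(ρ,θ) → L as ρ → ∞. Then ∂θ f ≡ 0 on (0, ∞) × U; that is, f depends on ρ alone. -/
/-!
Put `g ρ θ = (φ' ρ * f ρ θ)⁻¹`. The equation says precisely that `∂θ f / (f ^ 2 * φ')`, which is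
`-∂θ g`, does not depend on `ρ`. Hence `g ρ` converges as `ρ → ∞` together with its
`θ`-derivative (trivially uniformly), so the limit may be differentiated term by term. The limit is
the constant `L⁻¹`, and therefore `∂θ g = 0`.
-/

open Set Filter Topology

section NormedField

variable {𝕜 𝕜' : Type*} [NontriviallyNormedField 𝕜] [NontriviallyNormedField 𝕜']
  [NormedAlgebra 𝕜 𝕜']

-- Where `v ≠ 0`, the equation says that `v` and `u ^ 2 * ψ` have the same logarithmic derivative.
lemma hasDerivAt_div_sq_mul_zero_of_ode {u v ψ : 𝕜 → 𝕜'} {x : 𝕜}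
    (hu : DifferentiableAt 𝕜 u x) (hv : DifferentiableAt 𝕜 v x) (hψ : DifferentiableAt 𝕜 ψ x)
    (hu₀ : u x ≠ 0) (hψ₀ : ψ x ≠ 0)
    (hode : deriv v x - deriv ψ x / ψ x * v x = 2 * deriv u x * v x / u x) :
    HasDerivAt (fun r => v r / (u r ^ 2 * ψ r)) 0 x := by
  have hquot := hv.hasDerivAt.fun_div ((hu.hasDerivAt.fun_pow 2).fun_mul hψ.hasDerivAt)
    (mul_ne_zero (pow_ne_zero 2 hu₀) hψ₀)
  refine hquot.congr_deriv ?_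
  rw [sub_eq_iff_eq_add.mp hode]
  field_simp
  ring

lemma hasDerivAt_inv_const_mul {h : 𝕜 → 𝕜'} {h' c : 𝕜'} {x : 𝕜} (hh : HasDerivAt h h' x)
    (hc : c ≠ 0) (hx : h x ≠ 0) :
    HasDerivAt (fun t => (c * h t)⁻¹) (-(h' / (h x ^ 2 * c))) x := by
  refine ((hh.const_mul c).fun_inv (mul_ne_zero hc hx)).congr_deriv ?_
  field_simp

end NormedField

lemma div_sq_mul_eq_of_ode {𝕜 𝕜' : Type*} [RCLike 𝕜] [NontriviallyNormedField 𝕜']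
    [NormedAlgebra 𝕜 𝕜'] {u v ψ : 𝕜 → 𝕜'} {s : Set 𝕜} (hs : IsOpen s) (hs' : IsPreconnected s)
    (hu : DifferentiableOn 𝕜 u s) (hv : DifferentiableOn 𝕜 v s) (hψ : DifferentiableOn 𝕜 ψ s)
    (hu₀ : ∀ x ∈ s, u x ≠ 0) (hψ₀ : ∀ x ∈ s, ψ x ≠ 0)
    (hode : ∀ x ∈ s, deriv v x - deriv ψ x / ψ x * v x = 2 * deriv u x * v x / u x)
    {x y : 𝕜} (hx : x ∈ s) (hy : y ∈ s) :
    v x / (u x ^ 2 * ψ x) = v y / (u y ^ 2 * ψ y) := by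
  have hderiv : ∀ z ∈ s, HasDerivAt (fun r => v r / (u r ^ 2 * ψ r)) 0 z := fun z hz =>
    have hz' := hs.mem_nhds hz
    hasDerivAt_div_sq_mul_zero_of_ode (hu.differentiableAt hz') (hv.differentiableAt hz')
      (hψ.differentiableAt hz') (hu₀ z hz) (hψ₀ z hz) (hode z hz)
  exact hs.is_const_of_deriv_eq_zero hs'
    (fun z hz => (hderiv z hz).differentiableAt.differentiableWithinAt)
    (fun z hz => (hderiv z hz).deriv) hx hy

lemma eq_zero_of_hasDerivAt_of_tendsto_const {ι 𝕜 F : Type*} [RCLike 𝕜] [NormedAddCommGroup F]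
    [NormedSpace 𝕜 F] {l : Filter ι} [l.NeBot] {s : Set 𝕜} (hs : IsOpen s) {g : ι → 𝕜 → F}
    {g' : 𝕜 → F} {c : F} (hg : ∀ᶠ i in l, ∀ x ∈ s, HasDerivAt (g i) (g' x) x)
    (hlim : ∀ x ∈ s, Tendsto (fun i => g i x) l (𝓝 c)) {x : 𝕜} (hx : x ∈ s) :
    g' x = 0 := by
  have hunif : TendstoUniformlyOn (fun _ : ι => g') g' l s := fun _ hV =>
    Eventually.of_forall fun _ _ _ => refl_mem_uniformity hV
  exact (hasDerivAt_of_tendstoUniformlyOn hs hunif hg hlim hx).unique (hasDerivAt_const x c)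

section Slices

variable {𝕜 E F G : Type*} [NontriviallyNormedField 𝕜] [NormedAddCommGroup E] [NormedSpace 𝕜 E]
  [NormedAddCommGroup F] [NormedSpace 𝕜 F] [NormedAddCommGroup G] [NormedSpace 𝕜 G]
  {s : Set E}

lemma differentiableOn_slice_fst {t : Set F} {f : E → F → G}
    (hf : DifferentiableOn 𝕜 (fun p : E × F => f p.1 p.2) (s ×ˢ t)) {y : F} (hy : y ∈ t) :
    DifferentiableOn 𝕜 (fun x => f x y) s :=
  hf.comp (f := fun x => (x, y)) (by fun_prop) fun _ hx => ⟨hx, hy⟩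

lemma differentiableOn_slice_snd {t : Set F} {f : E → F → G}
    (hf : DifferentiableOn 𝕜 (fun p : E × F => f p.1 p.2) (s ×ˢ t)) {x : E} (hx : x ∈ s) :
    DifferentiableOn 𝕜 (f x) t :=
  hf.comp (f := fun y => (x, y)) (by fun_prop) fun _ hy => ⟨hx, hy⟩

lemma differentiableOn_deriv_slice_snd {t : Set 𝕜} {f : E → 𝕜 → G} (hs : IsOpen s)
    (ht : IsOpen t) (hf : ContDiffOn 𝕜 2 (fun p : E × 𝕜 => f p.1 p.2) (s ×ˢ t)) {y : 𝕜}
    (hy : y ∈ t) : DifferentiableOn 𝕜 (fun x => deriv (f x) y) s := by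
  intro x hx
  have hfderiv : ContDiffAt 𝕜 1 (fun x => fderiv 𝕜 (f x) y) x :=
    (hf.contDiffAt ((hs.prod ht).mem_nhds ⟨hx, hy⟩)).fderiv contDiffAt_const one_add_one_eq_two.le
  simp only [← fderiv_apply_one_eq_deriv]
  exact ((hfderiv.differentiableAt one_ne_zero).clm_apply
    (differentiableAt_const 1)).differentiableWithinAt

end Slices

theorem stmt_12_general {𝕜 : Type*} [RCLike 𝕜] {U : Set 𝕜} (hU : IsOpen U) {f : ℝ → 𝕜 → 𝕜}
    (hfρ : ∀ θ ∈ U, DifferentiableOn ℝ (fun r => f r θ) (Ioi 0))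
    (hfθ : ∀ ρ : ℝ, 0 < ρ → DifferentiableOn 𝕜 (f ρ) U)
    (hfθρ : ∀ θ ∈ U, DifferentiableOn ℝ (fun r => deriv (f r) θ) (Ioi 0))
    (hf₀ : ∀ ρ : ℝ, 0 < ρ → ∀ θ ∈ U, f ρ θ ≠ 0)
    {φ : ℝ → 𝕜} (hφ : DifferentiableOn ℝ (deriv φ) (Ioi 0))
    (hφ' : ∀ ρ : ℝ, 0 < ρ → deriv φ ρ ≠ 0)
    (hPDE : ∀ ρ : ℝ, 0 < ρ → ∀ θ ∈ U,
      deriv (fun r => deriv (f r) θ) ρ - deriv (deriv φ) ρ / deriv φ ρ * deriv (f ρ) θ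
        = 2 * deriv (fun r => f r θ) ρ * deriv (f ρ) θ / f ρ θ)
    {L : 𝕜} (hL : L ≠ 0)
    (hlim : ∀ θ ∈ U, Tendsto (fun ρ => deriv φ ρ * f ρ θ) atTop (𝓝 L))
    {ρ : ℝ} (hρ : 0 < ρ) {θ : 𝕜} (hθ : θ ∈ U) :
    deriv (f ρ) θ = 0 := by
  let A : 𝕜 → 𝕜 := fun t => deriv (f ρ) t / (f ρ t ^ 2 * deriv φ ρ)
  have hA : ∀ r : ℝ, 0 < r → ∀ t ∈ U, deriv (f r) t / (f r t ^ 2 * deriv φ r) = A t :=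
    fun r hr t ht => div_sq_mul_eq_of_ode isOpen_Ioi isPreconnected_Ioi (hfρ t ht) (hfθρ t ht) hφ
      (fun q hq => hf₀ q hq t ht) hφ' (fun q hq => hPDE q hq t ht) hr hρ
  have hg : ∀ r : ℝ, 0 < r → ∀ t ∈ U, HasDerivAt (fun t => (deriv φ r * f r t)⁻¹) (-A t) t := by
    intro r hr t ht
    rw [← hA r hr t ht]
    exact hasDerivAt_inv_const_mul ((hfθ r hr).hasDerivAt (hU.mem_nhds ht)) (hφ' r hr)
      (hf₀ r hr t ht)
  have hAθ : -A θ = 0 := eq_zero_of_hasDerivAt_of_tendsto_const hU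
    ((eventually_gt_atTop 0).mono hg) (fun t ht => (hlim t ht).inv₀ hL) hθ
  simpa [A, hf₀ ρ hρ θ hθ, hφ' ρ hρ] using hAθ

/-- Central analytic step in the proof of Theorem 3.1: equation (3.15) together with
`φ′ f → L ≠ 0` as `ρ → ∞` forces `f` to depend on `ρ` alone. -/
theorem stmt_12 (U : Set ℝ) (hU : IsOpen U) (hU' : U.OrdConnected)
    (f : ℝ → ℝ → ℝ)
    (hf : ContDiffOn ℝ 2 (fun p : ℝ × ℝ => f p.1 p.2) (Set.Ioi (0 : ℝ) ×ˢ U))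
    (hfpos : ∀ ρ : ℝ, 0 < ρ → ∀ θ ∈ U, 0 < f ρ θ)
    (φ : ℝ → ℝ) (hφ : ContDiffOn ℝ 2 φ (Set.Ioi (0 : ℝ)))
    (hφ' : ∀ ρ : ℝ, 0 < ρ → deriv φ ρ ≠ 0)
    (hPDE : ∀ ρ : ℝ, 0 < ρ → ∀ θ ∈ U,
      deriv (fun r => deriv (fun t => f r t) θ) ρ
          - (deriv (deriv φ) ρ / deriv φ ρ) * deriv (fun t => f ρ t) θ
        = 2 * deriv (fun r => f r θ) ρ * deriv (fun t => f ρ t) θ / f ρ θ)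
    (L : ℝ) (hL : L ≠ 0)
    (hlim : ∀ θ ∈ U,
      Filter.Tendsto (fun ρ => deriv φ ρ * f ρ θ) Filter.atTop (nhds L)) :
    ∀ ρ : ℝ, 0 < ρ → ∀ θ ∈ U, deriv (fun t => f ρ t) θ = 0 :=
  have hf₁ := hf.differentiableOn two_ne_zero
  fun _ hρ _ hθ => stmt_12_general hU (fun _ => differentiableOn_slice_fst hf₁)
    (fun _ => differentiableOn_slice_snd hf₁)
    (fun _ => differentiableOn_deriv_slice_snd isOpen_Ioi hU hf)
    (fun ρ hρ θ hθ => (hfpos ρ hρ θ hθ).ne')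
    ((hφ.deriv_of_isOpen isOpen_Ioi one_add_one_eq_two.le).differentiableOn one_ne_zero)
    hφ' hPDE hL hlim hρ hθ
end
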